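/- arXiv:2009.02812 — 4 statements merged into one kernel-verified Lean document; each statement's English description precedes it below -/
import Mathlib

section
/- In H_k the two-sided ideal generated by the elements p_i^{(1^3)} for 1 ≤ i ≤ k−2, p_0^{(∅,1²)} − p_0^{(1²,∅)}, and p_{0^∨}^{(∅,1²)} − p_{0^∨}^{(1²,∅)} equals the two-sided ideal generated by the elements a³e_ie_{i+1}e_i − ae_i for 1 ≤ i ≤ k−2, a_0a²e_1e_0e_1 − a(t_0^{−1/2}t^{1/2} + t_0^{1/2}t^{−1/2})e_1, and a_ka²e_{k−1}e_ke_{k−1} − a(t_k^{−1/2}t^{1/2} + t_k^{1/2}t^{−1/2})e_{k−1}. Moreover, the two-sided ideal generated by a_0a²e_1e_0e_1 − a(t_0^{−1/2}t^{1/2} + t_0^{1/2}t^{−1/2})e_1 equals the two-sided ideal generated by the pair {p_0^{(∅,1²)}, p_0^{(1²,∅)}}, and the two-sided ideal generated by a_ka²e_{k−1}e_ke_{k−1} − a(t_k^{−1/2}t^{1/2} + t_k^{1/2}t^{−1/2})e_{k−1} equals the two-sided ideal generated by the pair {p_{0^∨}^{(∅,1²)}, p_{0^∨}^{(1²,∅)}}.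 -/
noncomputable section

open scoped BigOperators

namespace TwoBoundaryTL

variable (k : ℕ) (u u0 uk a a0 ak : ℂ)

/-- The free algebra on generators `T_i`, `i : ℕ` (only `i ≤ k` are used). -/
abbrev FA := FreeAlgebra ℂ ℕ

/-- The `i`-th generator of the free algebra. -/
def g (i : ℕ) : FA := FreeAlgebra.ι ℂ i

/-- Scalars in the free algebra. -/
def cst (z : ℂ) : FA := algebraMap ℂ FA z

/-- The defining relations of the two-boundary Hecke algebra `H_k`, with parameters
`u = t^{1/2}`, `u0 = t_0^{1/2}`, `uk = t_k^{1/2}`. -/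
inductive HeckeRel : FA → FA → Prop
  | quad0 : HeckeRel ((g 0 - cst u0) * (g 0 + cst u0⁻¹)) 0
  | quad (i : ℕ) (h1 : 1 ≤ i) (h2 : i ≤ k - 1) :
      HeckeRel ((g i - cst u) * (g i + cst u⁻¹)) 0
  | quadk : HeckeRel ((g k - cst uk) * (g k + cst uk⁻¹)) 0
  | braid0 : HeckeRel (g 0 * g 1 * g 0 * g 1) (g 1 * g 0 * g 1 * g 0)
  | braidk : HeckeRel (g (k-1) * g k * g (k-1) * g k) (g k * g (k-1) * g k * g (k-1))
  | braid (i : ℕ) (h1 : 1 ≤ i) (h2 : i ≤ k - 2) :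
      HeckeRel (g i * g (i+1) * g i) (g (i+1) * g i * g (i+1))
  | comm (i j : ℕ) (hij : i < j) (hj : j ≤ k) (h : 2 ≤ j - i) :
      HeckeRel (g i * g j) (g j * g i)

/-- The two-boundary Hecke algebra `H_k`. -/
def Hecke := RingQuot (HeckeRel k u u0 uk)

instance : Ring (Hecke k u u0 uk) :=
  inferInstanceAs (Ring (RingQuot (HeckeRel k u u0 uk)))

instance : Algebra ℂ (Hecke k u u0 uk) :=
  inferInstanceAs (Algebra ℂ (RingQuot (HeckeRel k u u0 uk)))

/-- The generator `T_i` of `H_k`. -/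
def T (i : ℕ) : Hecke k u u0 uk := RingQuot.mkAlgHom ℂ (HeckeRel k u u0 uk) (g i)

/-- Scalars in `H_k`. -/
def hc (z : ℂ) : Hecke k u u0 uk := algebraMap ℂ (Hecke k u u0 uk) z

/-- The inverse of `T_i`, given by the explicit formulas
`T_0⁻¹ = T_0 - (t_0^{1/2} - t_0^{-1/2})`, `T_i⁻¹ = T_i - (t^{1/2} - t^{-1/2})`,
`T_k⁻¹ = T_k - (t_k^{1/2} - t_k^{-1/2})`. -/
def Tinv (i : ℕ) : Hecke k u u0 uk :=
  if i = 0 then T k u u0 uk 0 - hc k u u0 uk (u0 - u0⁻¹)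
  else if i = k then T k u u0 uk k - hc k u u0 uk (uk - uk⁻¹)
  else T k u u0 uk i - hc k u u0 uk (u - u⁻¹)

/-- The elements `e_0 = a_0⁻¹(T_0 - t_0^{1/2})`, `e_i = a⁻¹(T_i - t^{1/2})` for `1 ≤ i ≤ k-1`,
`e_k = a_k⁻¹(T_k - t_k^{1/2})`. -/
def e (i : ℕ) : Hecke k u u0 uk :=
  if i = 0 then a0⁻¹ • (T k u u0 uk 0 - hc k u u0 uk u0)
  else if i = k then ak⁻¹ • (T k u u0 uk k - hc k u u0 uk uk)
  else a⁻¹ • (T k u u0 uk i - hc k u u0 uk u)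

/-- `W_1 = T_1⁻¹ T_2⁻¹ ⋯ T_{k-1}⁻¹ T_k T_{k-1} ⋯ T_2 T_1 T_0`. -/
def W1 : Hecke k u u0 uk :=
  ((List.range (k-1)).map (fun j => Tinv k u u0 uk (j+1))).prod *
    T k u u0 uk k *
    ((List.range (k-1)).reverse.map (fun j => T k u u0 uk (j+1))).prod *
    T k u u0 uk 0

/-- The Murphy elements: `W_j = T_j W_{j-1} T_j` for `2 ≤ j ≤ k`. -/
def W : ℕ → Hecke k u u0 uk
  | 0 => 1
  | 1 => W1 k u u0 uk
  | j + 2 => T k u u0 uk (j + 2) * W (j + 1) * T k u u0 uk (j + 2)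

/-- `W_1⁻¹ = T_0⁻¹ T_1⁻¹ ⋯ T_{k-1}⁻¹ T_k⁻¹ T_{k-1} ⋯ T_1`. -/
def W1inv : Hecke k u u0 uk :=
  Tinv k u u0 uk 0 *
    ((List.range (k-1)).map (fun j => Tinv k u u0 uk (j+1))).prod *
    Tinv k u u0 uk k *
    ((List.range (k-1)).reverse.map (fun j => T k u u0 uk (j+1))).prod

/-- The inverses of the Murphy elements. -/
def Winv : ℕ → Hecke k u u0 uk
  | 0 => 1
  | 1 => W1inv k u u0 uk
  | j + 2 => Tinv k u u0 uk (j + 2) * Winv (j + 1) * Tinv k u u0 uk (j + 2)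

/-- The central element `Z = W_1 + W_1⁻¹ + ⋯ + W_k + W_k⁻¹`. -/
def Z : Hecke k u u0 uk :=
  ∑ j ∈ Finset.range k, (W k u u0 uk (j + 1) + Winv k u u0 uk (j + 1))

/-- The relations defining the two-boundary Temperley–Lieb algebra as a quotient of `H_k`. -/
inductive TLRel : Hecke k u u0 uk → Hecke k u u0 uk → Prop
  | braidA (i : ℕ) (h1 : 1 ≤ i) (h2 : i ≤ k - 2) :
      TLRel ((a ^ 3) • (e k u u0 uk a a0 ak i * e k u u0 uk a a0 ak (i+1) * e k u u0 uk a a0 ak i)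
        - a • e k u u0 uk a a0 ak i) 0
  | braidB (i : ℕ) (h1 : 1 ≤ i) (h2 : i ≤ k - 2) :
      TLRel ((a ^ 3) • (e k u u0 uk a a0 ak (i+1) * e k u u0 uk a a0 ak i * e k u u0 uk a a0 ak (i+1))
        - a • e k u u0 uk a a0 ak (i+1)) 0
  | bd0 :
      TLRel ((a0 * a ^ 2) • (e k u u0 uk a a0 ak 1 * e k u u0 uk a a0 ak 0 * e k u u0 uk a a0 ak 1)
        - (a * (u0⁻¹ * u + u0 * u⁻¹)) • e k u u0 uk a a0 ak 1) 0
  | bdk :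
      TLRel ((ak * a ^ 2) • (e k u u0 uk a a0 ak (k-1) * e k u u0 uk a a0 ak k * e k u u0 uk a a0 ak (k-1))
        - (a * (uk⁻¹ * u + uk * u⁻¹)) • e k u u0 uk a a0 ak (k-1)) 0

/-- The two-boundary Temperley–Lieb algebra `TL_k`. -/
def TL := RingQuot (TLRel k u u0 uk a a0 ak)

instance : Ring (TL k u u0 uk a a0 ak) :=
  inferInstanceAs (Ring (RingQuot (TLRel k u u0 uk a a0 ak)))

instance : Algebra ℂ (TL k u u0 uk a a0 ak) :=
  inferInstanceAs (Algebra ℂ (RingQuot (TLRel k u u0 uk a a0 ak)))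

/-- The quotient map `H_k → TL_k`. -/
def π : Hecke k u u0 uk →ₐ[ℂ] TL k u u0 uk a a0 ak :=
  RingQuot.mkAlgHom ℂ (TLRel k u u0 uk a a0 ak)

/-- `I_1 = (ae_1)(ae_3)⋯(ae_{k-1})` for `k` even, `(ae_1)(ae_3)⋯(ae_{k-2})e_k` for `k` odd. -/
def I1 : Hecke k u u0 uk :=
  if k % 2 = 0 then
    ((List.range (k / 2)).map (fun j => a • e k u u0 uk a a0 ak (2*j+1))).prod
  else
    ((List.range ((k-1) / 2)).map (fun j => a • e k u u0 uk a a0 ak (2*j+1))).prod *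
      e k u u0 uk a a0 ak k

/-- `I_2 = e_0(ae_2)(ae_4)⋯(ae_{k-2})e_k` for `k` even, `e_0(ae_2)(ae_4)⋯(ae_{k-1})` for `k` odd. -/
def I2 : Hecke k u u0 uk :=
  if k % 2 = 0 then
    e k u u0 uk a a0 ak 0 *
      ((List.range (k / 2 - 1)).map (fun j => a • e k u u0 uk a a0 ak (2*j+2))).prod *
      e k u u0 uk a a0 ak k
  else
    e k u u0 uk a a0 ak 0 *
      ((List.range ((k-1) / 2)).map (fun j => a • e k u u0 uk a a0 ak (2*j+2))).prod

/-- The quantum integer `[k] = (t^{1/2})^{-(k-1)}(1 + t + ⋯ + t^{k-1})`. -/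
def qk : ℂ := (u⁻¹) ^ (k - 1) * ∑ j ∈ Finset.range k, (u ^ 2) ^ j

/-!
The element `p^{(∅,1²)}` is a left multiple of the difference `p^{(∅,1²)} - p^{(1²,∅)}`, so the pair
and its difference generate the same ideal; and the difference is a nonzero scalar multiple of
the Temperley–Lieb relation element in the same two letters. At the left boundary these letters are
`e_0`, `e_1`, and nothing more is needed. At the right boundary the idempotents are written in
`e_{0^∨}`, `e_1` but the relation element in `e_k`, `e_{k-1}`. Put `D_m = T_m ⋯ T_1`.
Since `T_{0^∨} = D_{k-1}⁻¹ T_k D_{k-1}`, the unit `D_{k-2} D_{k-1}` conjugates `T_{0^∨}` to `T_k`,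
and by the braid relations it conjugates `T_1` to `T_{k-1}`, hence it carries one pair of letters to
the other and leaves the ideal unchanged.
-/

section TwoSidedIdeals

lemma twoSidedIdeal_span_union {A : Type*} [NonUnitalNonAssocRing A] (s t : Set A) :
    TwoSidedIdeal.span (s ∪ t) = TwoSidedIdeal.span s ⊔ TwoSidedIdeal.span t := by
  apply le_antisymm
  · rw [TwoSidedIdeal.span_le]
    exact Set.union_subset (TwoSidedIdeal.span_le.1 le_sup_left)
      (TwoSidedIdeal.span_le.1 le_sup_right)
  · exact sup_le (TwoSidedIdeal.span_mono Set.subset_union_left)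
      (TwoSidedIdeal.span_mono Set.subset_union_right)

lemma twoSidedIdeal_span_pair {A : Type*} [NonUnitalNonAssocRing A] (x y : A) :
    TwoSidedIdeal.span {x, y} = TwoSidedIdeal.span {x} ⊔ TwoSidedIdeal.span {y} := by
  rw [Set.insert_eq, twoSidedIdeal_span_union]

lemma twoSidedIdeal_span_pair_eq_span_sub {A : Type*} [NonUnitalNonAssocRing A] {x y : A}
    (hx : x ∈ TwoSidedIdeal.span {x - y}) :
    TwoSidedIdeal.span {x, y} = TwoSidedIdeal.span {x - y} := by
  apply le_antisymm <;> rw [TwoSidedIdeal.span_le]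
  · have hxy : x - y ∈ TwoSidedIdeal.span {x - y} := TwoSidedIdeal.subset_span rfl
    rintro z (rfl | rfl)
    · exact hx
    · simpa using sub_mem hx hxy
  · rintro _ rfl
    exact sub_mem (TwoSidedIdeal.subset_span (by simp)) (TwoSidedIdeal.subset_span (by simp))

lemma smul_mem_twoSidedIdeal {R A : Type*} [SMul R A] [NonAssocRing A] [IsScalarTower R A A]
    (I : TwoSidedIdeal A) (c : R) {x : A} (hx : x ∈ I) : c • x ∈ I := by
  rw [← smul_one_mul c x]
  exact I.mul_mem_left _ _ hx

lemma twoSidedIdeal_span_image_smul {G A : Type*} [GroupWithZero G] [MulAction G A] [NonAssocRing A]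
    [IsScalarTower G A A] {c : G} (hc : c ≠ 0) (s : Set A) :
    TwoSidedIdeal.span ((c • ·) '' s) = TwoSidedIdeal.span s := by
  apply le_antisymm <;> rw [TwoSidedIdeal.span_le]
  · rintro _ ⟨x, hx, rfl⟩
    exact smul_mem_twoSidedIdeal _ c (TwoSidedIdeal.subset_span hx)
  · intro x hx
    rw [← inv_smul_smul₀ hc x]
    exact smul_mem_twoSidedIdeal _ c⁻¹
      (TwoSidedIdeal.subset_span (Set.mem_image_of_mem _ hx))

lemma twoSidedIdeal_span_singleton_eq_of_semiconjBy {A : Type*} [Ring A] {g : Aˣ} {x y : A}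
    (h : SemiconjBy (g : A) x y) : TwoSidedIdeal.span {x} = TwoSidedIdeal.span {y} := by
  have hx : x = ↑g⁻¹ * y * g := by rw [mul_assoc, ← h.eq, Units.inv_mul_cancel_left]
  have hy : y = g * x * ↑g⁻¹ := by rw [h.eq, Units.mul_inv_cancel_right]
  apply le_antisymm <;> rw [TwoSidedIdeal.span_le, Set.singleton_subset_iff]
  · rw [hx]
    exact TwoSidedIdeal.mul_mem_right _ _ _
      (TwoSidedIdeal.mul_mem_left _ _ _ (TwoSidedIdeal.subset_span rfl))
  · rw [hy]
    exact TwoSidedIdeal.mul_mem_right _ _ _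
      (TwoSidedIdeal.mul_mem_left _ _ _ (TwoSidedIdeal.subset_span rfl))

end TwoSidedIdeals

lemma setOf_exists_le_le_eq_image_Icc {ι α : Type*} [Preorder ι] (f : ι → α) (m n : ι) :
    {x | ∃ i, m ≤ i ∧ i ≤ n ∧ x = f i} = f '' Set.Icc m n := by
  ext x
  simp only [Set.mem_ofPred_eq, Set.mem_image, Set.mem_Icc, and_assoc, eq_comm]

section BoundaryProjectors

variable {K A : Type*} [Field K] [Ring A] [Algebra K A]

/-- The Temperley–Lieb relation element of a boundary letter `x` next to an interior letter `y`,
where `b` and `a` normalise `x` and `y`, and `s` stands for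
`t_0^{-1/2} t^{1/2} + t_0^{1/2} t^{-1/2}` or its analogue for `t_k`. -/
def boundaryRelator (a b s : K) (x y : A) : A :=
  (b * a ^ 2) • (y * x * y) - (a * s) • y

/-- The element `p^{(∅,1²)}` in the letters `x`, `y`, with normalising constant `N`. -/
def emptyColumnProjector (N a b s : K) (x y : A) : A :=
  N⁻¹ • ((b ^ 2 * a ^ 2) • (x * y * x * y) - (b * a * s) • (x * y))

/-- The element `p^{(1²,∅)}` in the letters `x`, `y`, with normalising constant `N`. -/
def columnEmptyProjector (N a b s : K) (x y : A) : A :=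
  N⁻¹ • (((b ^ 2 * a ^ 2) • (x * y * x * y) - (b * a * s) • (x * y)) - boundaryRelator a b s x y)

lemma emptyColumnProjector_sub_columnEmptyProjector (N a b s : K) (x y : A) :
    emptyColumnProjector N a b s x y - columnEmptyProjector N a b s x y =
      N⁻¹ • boundaryRelator a b s x y := by
  rw [emptyColumnProjector, columnEmptyProjector, ← smul_sub, sub_sub_cancel]

lemma emptyColumnProjector_eq_smul_mul (N a b s : K) (x y : A) :
    emptyColumnProjector N a b s x y =
      (b • x) * (N⁻¹ • boundaryRelator a b s x y) := by
  simp only [emptyColumnProjector, boundaryRelator, mul_sub, smul_sub, mul_smul_comm,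
    smul_mul_assoc, mul_assoc]
  module

lemma span_boundaryProjectors_sub {N : K} (hN : N ≠ 0) (a b s : K) (x y : A) :
    TwoSidedIdeal.span
        {emptyColumnProjector N a b s x y - columnEmptyProjector N a b s x y} =
      TwoSidedIdeal.span {boundaryRelator a b s x y} := by
  rw [emptyColumnProjector_sub_columnEmptyProjector,
    ← twoSidedIdeal_span_image_smul (inv_ne_zero hN) {boundaryRelator a b s x y},
    Set.image_singleton]

lemma span_boundaryProjectors {N : K} (hN : N ≠ 0) (a b s : K) (x y : A) :
    TwoSidedIdeal.span {emptyColumnProjector N a b s x y, columnEmptyProjector N a b s x y} =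
      TwoSidedIdeal.span {boundaryRelator a b s x y} := by
  rw [twoSidedIdeal_span_pair_eq_span_sub, span_boundaryProjectors_sub hN]
  rw [emptyColumnProjector_sub_columnEmptyProjector, emptyColumnProjector_eq_smul_mul]
  exact TwoSidedIdeal.mul_mem_left _ _ _ (TwoSidedIdeal.subset_span rfl)

lemma semiconjBy_boundaryRelator {g x y x' y' : A} (hx : SemiconjBy g x x')
    (hy : SemiconjBy g y y') (a b s : K) :
    SemiconjBy g (boundaryRelator a b s x y) (boundaryRelator a b s x' y') :=
  (((hy.mul_right hx).mul_right hy).smul_right _).sub_right (hy.smul_right _)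

end BoundaryProjectors

section DescendingProducts

variable {M : Type*} [Monoid M] {t : ℕ → M} {m : ℕ}

/-- The descending product `t m * t (m - 1) * ⋯ * t 1`, in the form in which it occurs in `W1`. -/
def descProd (t : ℕ → M) (m : ℕ) : M :=
  ((List.range m).reverse.map (fun j => t (j + 1))).prod

lemma descProd_zero (t : ℕ → M) : descProd t 0 = 1 := rfl

lemma descProd_succ (t : ℕ → M) (m : ℕ) : descProd t (m + 1) = t (m + 1) * descProd t m := by
  simp [descProd, List.range_succ]

lemma isUnit_descProd (h : ∀ i, 1 ≤ i → i ≤ m → IsUnit (t i)) : IsUnit (descProd t m) := by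
  apply List.prod_isUnit
  simp only [List.mem_map, List.mem_reverse, List.mem_range]
  rintro _ ⟨j, hj, rfl⟩
  exact h (j + 1) (Nat.le_add_left 1 j) hj

lemma commute_descProd {x : M} (h : ∀ i, 1 ≤ i → i ≤ m → Commute (t i) x) :
    Commute (descProd t m) x := by
  apply Commute.list_prod_left
  simp only [List.mem_map, List.mem_reverse, List.mem_range]
  rintro _ ⟨j, hj, rfl⟩
  exact h (j + 1) (Nat.le_add_left 1 j) hj

lemma descProd_mul_prod_eq_one {s : ℕ → M} (h : ∀ i, 1 ≤ i → i ≤ m → t i * s i = 1) :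
    descProd t m * ((List.range m).map (fun j => s (j + 1))).prod = 1 := by
  induction m with
  | zero => simp [descProd_zero]
  | succ m ih =>
    have hm := ih fun i h₁ h₂ => h i h₁ (Nat.le_succ_of_le h₂)
    rw [descProd_succ, List.range_succ, List.map_append, List.prod_append, List.map_singleton,
      List.prod_singleton, mul_assoc, ← mul_assoc (descProd t m), hm, one_mul,
      h (m + 1) (Nat.le_add_left 1 m) le_rfl]

lemma semiconjBy_descProd_mul_descProd_succ
    (hbraid : ∀ i, 1 ≤ i → i ≤ m → t i * t (i + 1) * t i = t (i + 1) * t i * t (i + 1))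
    (hcomm : ∀ i j, 1 ≤ i → i + 2 ≤ j → j ≤ m + 1 → Commute (t i) (t j)) :
    SemiconjBy (descProd t m * descProd t (m + 1)) (t 1) (t (m + 1)) := by
  induction m with
  | zero => simp [descProd_zero, descProd_succ, SemiconjBy]
  | succ m ih =>
    have hD : Commute (descProd t m) (t (m + 2)) :=
      commute_descProd fun i h₁ h₂ => hcomm i (m + 2) h₁ (by omega) le_rfl
    have hstep : descProd t (m + 1) * descProd t (m + 2) =
        t (m + 1) * t (m + 2) * (descProd t m * descProd t (m + 1)) := by
      rw [descProd_succ t (m + 1), ← mul_assoc, descProd_succ t m, mul_assoc (t (m + 1)), hD.eq]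
      simp only [mul_assoc]
    have hlast : SemiconjBy (t (m + 1) * t (m + 2)) (t (m + 1)) (t (m + 2)) := by
      rw [SemiconjBy, hbraid (m + 1) (Nat.le_add_left 1 m) le_rfl, mul_assoc]
    rw [hstep]
    exact hlast.mul_left (ih (fun i h₁ h₂ => hbraid i h₁ (by omega))
      fun i j h₁ h₂ h₃ => hcomm i j h₁ h₂ (by omega))

end DescendingProducts

section HeckeAlgebra

lemma mul_sub_algebraMap_eq_one {K A : Type*} [Field K] [Ring A] [Algebra K A] {x : A}
    {v : K} (hv : v ≠ 0) (h : (x - algebraMap K A v) * (x + algebraMap K A v⁻¹) = 0) :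
    x * (x - algebraMap K A (v - v⁻¹)) = 1 := by
  have hvv : algebraMap K A v * algebraMap K A v⁻¹ = 1 := by
    rw [← map_mul, mul_inv_cancel₀ hv, map_one]
  have hexpand : (x - algebraMap K A v) * (x + algebraMap K A v⁻¹) =
      x * (x - algebraMap K A (v - v⁻¹)) - algebraMap K A v * algebraMap K A v⁻¹ := by
    rw [map_sub, sub_mul, mul_add, mul_add, mul_sub, mul_sub, Algebra.commutes v x]
    abel
  rwa [hexpand, hvv, sub_eq_zero] at h

variable {k : ℕ} {u u0 uk : ℂ}

/-- The quotient map from the free algebra to `H_k`, with codomain `Hecke` in place of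
`RingQuot`. -/
def heckeMk (k : ℕ) (u u0 uk : ℂ) : FA →ₐ[ℂ] Hecke k u u0 uk :=
  RingQuot.mkAlgHom ℂ (HeckeRel k u u0 uk)

lemma heckeMk_g (i : ℕ) : heckeMk k u u0 uk (g i) = T k u u0 uk i := rfl

lemma heckeMk_cst (z : ℂ) : heckeMk k u u0 uk (cst z) = algebraMap ℂ (Hecke k u u0 uk) z :=
  (heckeMk k u u0 uk).commutes z

lemma heckeMk_eq_of_rel {x y : FA} (h : HeckeRel k u u0 uk x y) :
    heckeMk k u u0 uk x = heckeMk k u u0 uk y :=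
  RingQuot.mkAlgHom_rel ℂ h

lemma T_zero_mul_Tinv (hu0 : u0 ≠ 0) : T k u u0 uk 0 * Tinv k u u0 uk 0 = 1 := by
  have h := heckeMk_eq_of_rel (HeckeRel.quad0 (k := k) (u := u) (u0 := u0) (uk := uk))
  simp only [map_mul, map_sub, map_add, map_zero, heckeMk_g, heckeMk_cst] at h
  exact mul_sub_algebraMap_eq_one hu0 h

lemma T_mul_Tinv (hu : u ≠ 0) {i : ℕ} (hi : 1 ≤ i) (hik : i < k) :
    T k u u0 uk i * Tinv k u u0 uk i = 1 := by
  have h := heckeMk_eq_of_rel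
    (HeckeRel.quad (k := k) (u := u) (u0 := u0) (uk := uk) i hi (Nat.le_sub_one_of_lt hik))
  simp only [map_mul, map_sub, map_add, map_zero, heckeMk_g, heckeMk_cst] at h
  rw [Tinv, if_neg (Nat.ne_of_gt hi), if_neg hik.ne]
  exact mul_sub_algebraMap_eq_one hu h

lemma commute_T_Tinv {i : ℕ} (hi : 1 ≤ i) (hik : i < k) :
    Commute (T k u u0 uk i) (Tinv k u u0 uk i) := by
  rw [Tinv, if_neg (Nat.ne_of_gt hi), if_neg hik.ne]
  exact (Commute.refl _).sub_right (Algebra.commute_algebraMap_right _ _)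

lemma isUnit_T (hu : u ≠ 0) {i : ℕ} (hi : 1 ≤ i) (hik : i < k) : IsUnit (T k u u0 uk i) :=
  isUnit_iff_exists.2 ⟨_, T_mul_Tinv hu hi hik,
    (commute_T_Tinv hi hik).eq.symm.trans (T_mul_Tinv hu hi hik)⟩

lemma T_braid {i : ℕ} (hi : 1 ≤ i) (hik : i ≤ k - 2) :
    T k u u0 uk i * T k u u0 uk (i + 1) * T k u u0 uk i =
      T k u u0 uk (i + 1) * T k u u0 uk i * T k u u0 uk (i + 1) := by
  simpa only [map_mul, heckeMk_g] using heckeMk_eq_of_rel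
    (HeckeRel.braid (k := k) (u := u) (u0 := u0) (uk := uk) i hi hik)

lemma commute_T {i j : ℕ} (hij : i + 2 ≤ j) (hjk : j ≤ k) :
    Commute (T k u u0 uk i) (T k u u0 uk j) := by
  have h := heckeMk_eq_of_rel
    (HeckeRel.comm (k := k) (u := u) (u0 := u0) (uk := uk) i j (by omega) hjk (by omega))
  rwa [map_mul, map_mul, heckeMk_g, heckeMk_g] at h

lemma semiconjBy_descProd_W1_mul_Tinv_zero (hu : u ≠ 0) (hu0 : u0 ≠ 0) :
    SemiconjBy (descProd (T k u u0 uk) (k - 1)) (W1 k u u0 uk * Tinv k u u0 uk 0)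
      (T k u u0 uk k) := by
  have hinv := descProd_mul_prod_eq_one (t := T k u u0 uk) (s := Tinv k u u0 uk) (m := k - 1)
    fun i h₁ h₂ => T_mul_Tinv hu h₁ (by omega)
  rw [SemiconjBy, W1, mul_assoc _ (T k u u0 uk 0), T_zero_mul_Tinv hu0, mul_one, ← mul_assoc,
    ← mul_assoc, hinv, one_mul, descProd]

lemma exists_units_semiconjBy_T (hk : 2 ≤ k) (hu : u ≠ 0) (hu0 : u0 ≠ 0) :
    ∃ X : (Hecke k u u0 uk)ˣ,
      SemiconjBy (X : Hecke k u u0 uk) (T k u u0 uk 1) (T k u u0 uk (k - 1)) ∧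
      SemiconjBy (X : Hecke k u u0 uk) (W1 k u u0 uk * Tinv k u u0 uk 0) (T k u u0 uk k) := by
  obtain ⟨n, rfl⟩ : ∃ n, k = n + 2 := Nat.exists_eq_add_of_le' hk
  have hunit {m : ℕ} (hm : m ≤ n + 1) : IsUnit (descProd (T (n + 2) u u0 uk) m) :=
    isUnit_descProd fun i h₁ h₂ => isUnit_T hu h₁ (by omega)
  have hcomm : Commute (descProd (T (n + 2) u u0 uk) n) (T (n + 2) u u0 uk (n + 2)) :=
    commute_descProd fun i _ h₂ => commute_T (by omega) le_rfl
  refine ⟨((hunit n.le_succ).mul (hunit le_rfl)).unit, ?_, ?_⟩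
  · exact semiconjBy_descProd_mul_descProd_succ (fun i h₁ h₂ => T_braid h₁ h₂)
      fun i j _ h₂ h₃ => commute_T h₂ (by omega)
  · exact hcomm.semiconjBy.mul_left (semiconjBy_descProd_W1_mul_Tinv_zero hu hu0)

lemma exists_units_semiconjBy_e (hk : 2 ≤ k) (hu : u ≠ 0) (hu0 : u0 ≠ 0) (a a0 ak : ℂ) :
    ∃ X : (Hecke k u u0 uk)ˣ,
      SemiconjBy (X : Hecke k u u0 uk) (e k u u0 uk a a0 ak 1) (e k u u0 uk a a0 ak (k - 1)) ∧
      SemiconjBy (X : Hecke k u u0 uk)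
        (ak⁻¹ • (W1 k u u0 uk * Tinv k u u0 uk 0 - hc k u u0 uk uk)) (e k u u0 uk a a0 ak k) := by
  obtain ⟨X, hX₁, hXk⟩ := exists_units_semiconjBy_T (uk := uk) hk hu hu0
  have hscalar (z : ℂ) : SemiconjBy (X : Hecke k u u0 uk) (hc k u u0 uk z) (hc k u u0 uk z) :=
    Algebra.commute_algebraMap_right z _
  refine ⟨X, ?_, ?_⟩
  · rw [e, if_neg one_ne_zero, if_neg (by omega), e, if_neg (by omega), if_neg (by omega)]
    exact (hX₁.sub_right (hscalar u)).smul_right a⁻¹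
  · rw [e, if_neg (by omega), if_pos rfl]
    exact (hXk.sub_right (hscalar uk)).smul_right ak⁻¹

end HeckeAlgebra

/-- the ideal of `H_k` generated by the idempotents `p_i^{(1^3)}`,
`p_0^{(∅,1²)} - p_0^{(1²,∅)}`, `p_{0^∨}^{(∅,1²)} - p_{0^∨}^{(1²,∅)}` coincides with the ideal
generated by the Temperley–Lieb relation elements; and the corresponding statements for the
boundary idempotent pairs. -/
theorem statement0 (k : ℕ) (hk : 2 ≤ k) (u u0 uk a a0 ak : ℂ)
    (hu : u ≠ 0) (hu0 : u0 ≠ 0) (huk : uk ≠ 0) (ha : a ≠ 0) (ha0 : a0 ≠ 0) (hak : ak ≠ 0)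
    (N N0 Nk : ℂ)
    (hN : N = u⁻¹ * (1 + u ^ 2) * (1 + u ^ 2 + u ^ 4))
    (hN0 : N0 = (u0 ^ 2)⁻¹ * (u ^ 2)⁻¹ * (1 + u0 ^ 2) * (1 + u ^ 2) * (1 + u0 ^ 2 * u ^ 2))
    (hNk : Nk = (uk ^ 2)⁻¹ * (u ^ 2)⁻¹ * (1 + uk ^ 2) * (1 + u ^ 2) * (1 + uk ^ 2 * u ^ 2))
    (hNne : N ≠ 0) (hN0ne : N0 ≠ 0) (hNkne : Nk ≠ 0)
    -- the Temperley–Lieb relation elements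
    (F : ℕ → Hecke k u u0 uk)
    (hF : ∀ i, F i = (a ^ 3) • (e k u u0 uk a a0 ak i * e k u u0 uk a a0 ak (i+1) *
        e k u u0 uk a a0 ak i) - a • e k u u0 uk a a0 ak i)
    (F0 : Hecke k u u0 uk)
    (hF0 : F0 = (a0 * a ^ 2) • (e k u u0 uk a a0 ak 1 * e k u u0 uk a a0 ak 0 *
        e k u u0 uk a a0 ak 1) - (a * (u0⁻¹ * u + u0 * u⁻¹)) • e k u u0 uk a a0 ak 1)
    (Fk : Hecke k u u0 uk)
    (hFk : Fk = (ak * a ^ 2) • (e k u u0 uk a a0 ak (k-1) * e k u u0 uk a a0 ak k *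
        e k u u0 uk a a0 ak (k-1)) - (a * (uk⁻¹ * u + uk * u⁻¹)) • e k u u0 uk a a0 ak (k-1))
    -- the idempotents
    (p : ℕ → Hecke k u u0 uk)
    (hp : ∀ i, p i = N⁻¹ • F i)
    (T0v e0v : Hecke k u u0 uk)
    (hT0v : T0v = W1 k u u0 uk * Tinv k u u0 uk 0)
    (he0v : e0v = ak⁻¹ • (T0v - hc k u u0 uk uk))
    (p0A p0B pvA pvB : Hecke k u u0 uk)
    (hp0A : p0A = N0⁻¹ • ((a0 ^ 2 * a ^ 2) • (e k u u0 uk a a0 ak 0 * e k u u0 uk a a0 ak 1 *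
          e k u u0 uk a a0 ak 0 * e k u u0 uk a a0 ak 1)
        - (a0 * a * (u0⁻¹ * u + u0 * u⁻¹)) • (e k u u0 uk a a0 ak 0 * e k u u0 uk a a0 ak 1)))
    (hp0B : p0B = N0⁻¹ • (((a0 ^ 2 * a ^ 2) • (e k u u0 uk a a0 ak 0 * e k u u0 uk a a0 ak 1 *
            e k u u0 uk a a0 ak 0 * e k u u0 uk a a0 ak 1)
          - (a0 * a * (u0⁻¹ * u + u0 * u⁻¹)) • (e k u u0 uk a a0 ak 0 * e k u u0 uk a a0 ak 1))
        - ((a0 * a ^ 2) • (e k u u0 uk a a0 ak 1 * e k u u0 uk a a0 ak 0 * e k u u0 uk a a0 ak 1)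
          - (a * (u0⁻¹ * u + u0 * u⁻¹)) • e k u u0 uk a a0 ak 1)))
    (hpvA : pvA = Nk⁻¹ • ((ak ^ 2 * a ^ 2) • (e0v * e k u u0 uk a a0 ak 1 * e0v *
          e k u u0 uk a a0 ak 1)
        - (ak * a * (uk⁻¹ * u + uk * u⁻¹)) • (e0v * e k u u0 uk a a0 ak 1)))
    (hpvB : pvB = Nk⁻¹ • (((ak ^ 2 * a ^ 2) • (e0v * e k u u0 uk a a0 ak 1 * e0v *
            e k u u0 uk a a0 ak 1)
          - (ak * a * (uk⁻¹ * u + uk * u⁻¹)) • (e0v * e k u u0 uk a a0 ak 1))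
        - ((ak * a ^ 2) • (e k u u0 uk a a0 ak 1 * e0v * e k u u0 uk a a0 ak 1)
          - (a * (uk⁻¹ * u + uk * u⁻¹)) • e k u u0 uk a a0 ak 1))) :
    TwoSidedIdeal.span ({x | ∃ i, 1 ≤ i ∧ i ≤ k - 2 ∧ x = p i} ∪ {p0A - p0B, pvA - pvB})
      = TwoSidedIdeal.span ({x | ∃ i, 1 ≤ i ∧ i ≤ k - 2 ∧ x = F i} ∪ {F0, Fk}) ∧
    TwoSidedIdeal.span {F0} = TwoSidedIdeal.span {p0A, p0B} ∧
    TwoSidedIdeal.span {Fk} = TwoSidedIdeal.span {pvA, pvB} := by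
  obtain ⟨X, hX₁, hXk⟩ := exists_units_semiconjBy_e (uk := uk) hk hu hu0 a a0 ak
  rw [← hT0v, ← he0v] at hXk
  have hconj : TwoSidedIdeal.span
      {boundaryRelator a ak (uk⁻¹ * u + uk * u⁻¹) e0v (e k u u0 uk a a0 ak 1)} =
      TwoSidedIdeal.span {Fk} :=
    hFk ▸ twoSidedIdeal_span_singleton_eq_of_semiconjBy
      (semiconjBy_boundaryRelator hXk hX₁ a ak _)
  have hinterior : TwoSidedIdeal.span {x | ∃ i, 1 ≤ i ∧ i ≤ k - 2 ∧ x = p i} =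
      TwoSidedIdeal.span {x | ∃ i, 1 ≤ i ∧ i ≤ k - 2 ∧ x = F i} := by
    rw [setOf_exists_le_le_eq_image_Icc, setOf_exists_le_le_eq_image_Icc, funext hp,
      ← twoSidedIdeal_span_image_smul (inv_ne_zero hNne) (F '' _), Set.image_image]
  subst hp0A hp0B hpvA hpvB hF0
  refine ⟨?_, ?_, ?_⟩
  · rw [twoSidedIdeal_span_union, twoSidedIdeal_span_union, twoSidedIdeal_span_pair,
      twoSidedIdeal_span_pair, hinterior, ← hconj]
    exact congrArg _ (congrArg₂ (· ⊔ ·) (span_boundaryProjectors_sub hN0ne ..)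
      (span_boundaryProjectors_sub hNkne ..))
  · exact (span_boundaryProjectors hN0ne ..).symm
  · exact hconj.symm.trans (span_boundaryProjectors hNkne ..).symm

end TwoBoundaryTL
end
end

section
/- Set N_0 = t_0^{−1}t^{−1}(1+t_0)(1+t)(1+t_0t) and assume N_0 ≠ 0. In H_k, the element p = N_0^{−1}(T_0T_1T_0T_1 − t_0^{1/2}T_1T_0T_1 − t^{1/2}T_0T_1T_0 + t_0^{1/2}t^{1/2}T_0T_1 + t_0^{1/2}t^{1/2}T_1T_0 − t_0t^{1/2}T_1 − t_0^{1/2}tT_0 + t_0t) satisfies p² = p, T_0·p = −t_0^{−1/2}·p, and T_1·p = −t^{−1/2}·p; moreover N_0·p = a_0²a²e_0e_1e_0e_1 − a_0a(t_0^{−1/2}t^{1/2} + t_0^{1/2}t^{−1/2})e_0e_1 = a_0²a²e_1e_0e_1e_0 − a_0a(t_0^{−1/2}t^{1/2} + t_0^{1/2}t^{−1/2})e_1e_0. -/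
noncomputable section

open scoped BigOperators

namespace TwoBoundaryTL

variable (k : ℕ) (u u0 uk a a0 ak : ℂ)

/-!
Put `A = T_0 - t_0^{1/2}` and `B = T_1 - t^{1/2}`, so that `A² = αA` and `B² = βB` for scalars
`α, β`. As `w` runs over the dihedral group of order 8, the signed sum of the `T_w` in `N_0 p`
factors as `A (T_1 T_0 + t_0^{1/2} t^{1/2}) B`, which the quadratic relations turn into
`ABAB - c AB` with `c = t_0^{-1/2} t^{1/2} + t_0^{1/2} t^{-1/2}`. The signed sum is symmetric in
`T_0, T_1` by the braid relation, so it also equals `BABA - c BA`. The first form is visibly an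
eigenvector of left multiplication by `A`, the second one of left multiplication by `B`; applying
`ABAB - c AB` to it then gives `(N_0 p)² = αβ(αβ - c) N_0 p`, and `αβ(αβ - c) = N_0`.
-/

section TLRelator

variable {K R : Type*} [CommRing K] [Ring R] [Algebra K R] {α β c : K} {x y : R}

/-- The element `x (yxy - c y)`, a left multiple of the type `B` Temperley–Lieb relator
`yxy - c y` (compare `TLRel.bd0`). -/
def tlRelator (c : K) (x y : R) : R :=
  x * y * x * y - c • (x * y)

lemma tlRelator_smul_smul (c r s : K) (x y : R) :
    tlRelator c (r • x) (s • y) =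
      (r ^ 2 * s ^ 2) • (x * y * x * y) - (r * s * c) • (x * y) := by
  simp only [tlRelator, smul_mul_assoc, mul_smul_comm, smul_smul]
  congr 2 <;> ring

lemma mul_tlRelator (hx : x * x = α • x) : x * tlRelator c x y = α • tlRelator c x y := by
  simp only [tlRelator, mul_sub, mul_smul_comm, ← mul_assoc, hx, smul_mul_assoc, smul_sub,
    smul_comm c α]

lemma tlRelator_mul_tlRelator (hx : x * x = α • x) (hy : y * y = β • y)
    (hxy : tlRelator c x y = tlRelator c y x) :
    tlRelator c x y * tlRelator c x y = (α * β * (α * β - c)) • tlRelator c x y := by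
  have hleft : x * tlRelator c x y = α • tlRelator c x y := mul_tlRelator hx
  have hright : y * tlRelator c x y = β • tlRelator c x y := by
    rw [hxy, mul_tlRelator hy]
  generalize hz : tlRelator c x y = z at hleft hright ⊢
  calc z * z = x * (y * (x * (y * z))) - c • (x * (y * z)) := by
        nth_rewrite 1 [← hz]
        simp only [tlRelator, sub_mul, smul_mul_assoc, mul_assoc]
    _ = (α * β * (α * β - c)) • z := by
        simp only [hleft, hright, mul_smul_comm, smul_smul, ← sub_smul]
        congr 1
        ring

end TLRelator

section HeckePair

variable {K R : Type*} [Field K] [Ring R] [Algebra K R] {q₀ q : K} {x y : R}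

lemma isIdempotentElem_inv_smul {r : K} (hr : r ≠ 0) (h : x * x = r • x) :
    IsIdempotentElem (r⁻¹ • x) := by
  rw [IsIdempotentElem, smul_mul_smul_comm, h, smul_smul, inv_mul_cancel_right₀ hr]

/-- The elements `x, y` of a `K`-algebra satisfy the relations of the generators of the Hecke
algebra of type `B₂`, with parameters the square roots `q₀, q` of the usual ones. -/
structure IsHeckePair (q₀ q : K) (x y : R) : Prop where
  quad_left : (x - algebraMap K R q₀) * (x + algebraMap K R q₀⁻¹) = 0
  quad_right : (y - algebraMap K R q) * (y + algebraMap K R q⁻¹) = 0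
  braid : x * y * x * y = y * x * y * x

/-- The unnormalised antisymmetrizer `∑ (-1)^ℓ(w₀w) q_{w₀w} T_w` of the type `B₂` Hecke algebra
with generators `x, y`; here `w` runs over the dihedral group of order 8, with longest element
`w₀`, and `q_v` is the product of the parameters `q₀, q` along a reduced word of `v`. -/
def antisymmetrizer (q₀ q : K) (x y : R) : R :=
  x * y * x * y - q₀ • (y * x * y) - q • (x * y * x) + (q₀ * q) • (x * y) + (q₀ * q) • (y * x)
    - (q₀ ^ 2 * q) • y - (q₀ * q ^ 2) • x + (q₀ ^ 2 * q ^ 2) • (1 : R)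

lemma sub_algebraMap_mul_self (h : (x - algebraMap K R q) * (x + algebraMap K R q⁻¹) = 0) :
    (x - algebraMap K R q) * (x - algebraMap K R q) =
      (-(q + q⁻¹)) • (x - algebraMap K R q) := by
  calc (x - algebraMap K R q) * (x - algebraMap K R q)
      = (x - algebraMap K R q) * (x + algebraMap K R q⁻¹)
          - (x - algebraMap K R q) * algebraMap K R (q + q⁻¹) := by
        rw [map_add]; noncomm_ring
    _ = (-(q + q⁻¹)) • (x - algebraMap K R q) := by
        rw [h, zero_sub, ← Algebra.commutes, ← Algebra.smul_def, neg_smul]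

lemma mul_eq_neg_inv_smul_of_sub_mul_eq {z : R}
    (h : (x - algebraMap K R q) * z = (-(q + q⁻¹)) • z) : x * z = (-q⁻¹) • z := by
  rw [sub_mul, ← Algebra.smul_def, sub_eq_iff_eq_add, ← add_smul] at h
  rw [h]
  congr 1
  ring

lemma antisymmetrizer_eq_mul_mul (q₀ q : K) (x y : R) :
    antisymmetrizer q₀ q x y =
      (x - algebraMap K R q₀) * (y * x + algebraMap K R (q₀ * q)) * (y - algebraMap K R q) := by
  simp only [antisymmetrizer, Algebra.algebraMap_eq_smul_one, mul_add, mul_sub, add_mul, sub_mul,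
    mul_smul_comm, smul_mul_assoc, mul_one, one_mul, ← mul_assoc]
  module

namespace IsHeckePair

lemma symm (h : IsHeckePair q₀ q x y) : IsHeckePair q q₀ y x :=
  ⟨h.quad_right, h.quad_left, h.braid.symm⟩

lemma antisymmetrizer_comm (h : IsHeckePair q₀ q x y) :
    antisymmetrizer q₀ q x y = antisymmetrizer q q₀ y x := by
  rw [antisymmetrizer, antisymmetrizer, h.braid]
  module

lemma antisymmetrizer_eq_tlRelator (h : IsHeckePair q₀ q x y) :
    antisymmetrizer q₀ q x y = tlRelator (q₀⁻¹ * q + q₀ * q⁻¹)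
      (x - algebraMap K R q₀) (y - algebraMap K R q) := by
  have hA := sub_algebraMap_mul_self h.quad_left
  have hB := sub_algebraMap_mul_self h.quad_right
  rw [antisymmetrizer_eq_mul_mul]
  set A := x - algebraMap K R q₀ with hAdef
  set B := y - algebraMap K R q with hBdef
  have hyx : y * x + algebraMap K R (q₀ * q) = B * A + q₀ • B + q • A + (2 * (q₀ * q)) • 1 := by
    rw [← sub_add_cancel x (algebraMap K R q₀), ← sub_add_cancel y (algebraMap K R q), ← hAdef,
      ← hBdef]
    simp only [Algebra.algebraMap_eq_smul_one, mul_add, add_mul, mul_smul_comm, smul_mul_assoc,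
      mul_one, one_mul]
    module
  calc A * (y * x + algebraMap K R (q₀ * q)) * B
      = A * B * A * B + q₀ • (A * (B * B)) + q • (A * A * B) + (2 * (q₀ * q)) • (A * B) := by
        rw [hyx]
        simp only [mul_add, add_mul, mul_smul_comm, smul_mul_assoc, mul_one, mul_assoc]
    _ = tlRelator (q₀⁻¹ * q + q₀ * q⁻¹) A B := by
        rw [hA, hB, tlRelator, mul_smul_comm, smul_mul_assoc]
        module

lemma antisymmetrizer_eq_tlRelator_swap (h : IsHeckePair q₀ q x y) :
    antisymmetrizer q₀ q x y = tlRelator (q₀⁻¹ * q + q₀ * q⁻¹)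
      (y - algebraMap K R q) (x - algebraMap K R q₀) := by
  rw [h.antisymmetrizer_comm, h.symm.antisymmetrizer_eq_tlRelator]
  congr 1
  ring

lemma left_mul_antisymmetrizer (h : IsHeckePair q₀ q x y) :
    x * antisymmetrizer q₀ q x y = (-q₀⁻¹) • antisymmetrizer q₀ q x y := by
  apply mul_eq_neg_inv_smul_of_sub_mul_eq
  rw [h.antisymmetrizer_eq_tlRelator]
  exact mul_tlRelator (sub_algebraMap_mul_self h.quad_left)

lemma right_mul_antisymmetrizer (h : IsHeckePair q₀ q x y) :
    y * antisymmetrizer q₀ q x y = (-q⁻¹) • antisymmetrizer q₀ q x y := by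
  rw [h.antisymmetrizer_comm, h.symm.left_mul_antisymmetrizer]

lemma antisymmetrizer_mul_self (h : IsHeckePair q₀ q x y) :
    antisymmetrizer q₀ q x y * antisymmetrizer q₀ q x y =
      ((q₀ + q₀⁻¹) * (q + q⁻¹) * (q₀ * q + q₀⁻¹ * q⁻¹)) • antisymmetrizer q₀ q x y := by
  have hswap := h.antisymmetrizer_eq_tlRelator.symm.trans h.antisymmetrizer_eq_tlRelator_swap
  rw [h.antisymmetrizer_eq_tlRelator, tlRelator_mul_tlRelator
    (sub_algebraMap_mul_self h.quad_left) (sub_algebraMap_mul_self h.quad_right) hswap]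
  congr 1
  ring

end IsHeckePair

theorem statement6_general (h : IsHeckePair q₀ q x y) (hq₀ : q₀ ≠ 0) (hq : q ≠ 0)
    {a₀ a : K} {e₀ e₁ : R} (he₀ : a₀ • e₀ = x - algebraMap K R q₀)
    (he₁ : a • e₁ = y - algebraMap K R q) {N : K}
    (hN : N = (q₀ ^ 2)⁻¹ * (q ^ 2)⁻¹ * (1 + q₀ ^ 2) * (1 + q ^ 2) * (1 + q₀ ^ 2 * q ^ 2))
    (hN_ne : N ≠ 0) {p : R} (hp : p = N⁻¹ • antisymmetrizer q₀ q x y) :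
    p * p = p ∧ x * p = (-q₀⁻¹) • p ∧ y * p = (-q⁻¹) • p ∧
    N • p = (a₀ ^ 2 * a ^ 2) • (e₀ * e₁ * e₀ * e₁)
        - (a₀ * a * (q₀⁻¹ * q + q₀ * q⁻¹)) • (e₀ * e₁) ∧
    N • p = (a₀ ^ 2 * a ^ 2) • (e₁ * e₀ * e₁ * e₀)
        - (a₀ * a * (q₀⁻¹ * q + q₀ * q⁻¹)) • (e₁ * e₀) := by
  have hN' : N = (q₀ + q₀⁻¹) * (q + q⁻¹) * (q₀ * q + q₀⁻¹ * q⁻¹) := by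
    rw [hN]; field_simp; ring
  have hNp : N • p = antisymmetrizer q₀ q x y := by rw [hp, smul_inv_smul₀ hN_ne]
  refine ⟨?_, ?_, ?_, ?_, ?_⟩
  · rw [hp]
    exact isIdempotentElem_inv_smul hN_ne (hN' ▸ h.antisymmetrizer_mul_self)
  · rw [hp, mul_smul_comm, h.left_mul_antisymmetrizer, smul_comm]
  · rw [hp, mul_smul_comm, h.right_mul_antisymmetrizer, smul_comm]
  · rw [hNp, h.antisymmetrizer_eq_tlRelator, ← he₀, ← he₁, tlRelator_smul_smul]
  · rw [hNp, h.antisymmetrizer_eq_tlRelator_swap, ← he₀, ← he₁, tlRelator_smul_smul,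
      mul_comm (a ^ 2), mul_comm a]

end HeckePair

lemma isHeckePair_T (hk : 2 ≤ k) : IsHeckePair u0 u (T k u u0 uk 0) (T k u u0 uk 1) where
  quad_left := by
    simpa [cst] using! RingQuot.mkAlgHom_rel ℂ
      (HeckeRel.quad0 (k := k) (u := u) (u0 := u0) (uk := uk))
  quad_right := by
    simpa [cst] using! RingQuot.mkAlgHom_rel ℂ
      (HeckeRel.quad (k := k) (u := u) (u0 := u0) (uk := uk) 1 le_rfl (by lia))
  braid := by
    simpa only [map_mul] using! RingQuot.mkAlgHom_rel ℂ
      (HeckeRel.braid0 (k := k) (u := u) (u0 := u0) (uk := uk))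

lemma smul_e_zero (ha0 : a0 ≠ 0) :
    a0 • e k u u0 uk a a0 ak 0 = T k u u0 uk 0 - algebraMap ℂ _ u0 := by
  rw [e, if_pos rfl, smul_inv_smul₀ ha0, hc]

lemma smul_e_of_ne {i : ℕ} (hi : i ≠ 0) (hik : i ≠ k) (ha : a ≠ 0) :
    a • e k u u0 uk a a0 ak i = T k u u0 uk i - algebraMap ℂ _ u := by
  rw [e, if_neg hi, if_neg hik, smul_inv_smul₀ ha, hc]

/-- the idempotent `p_0^{(∅,1²)}` of `H_k`. -/
theorem statement6 (k : ℕ) (hk : 2 ≤ k) (u u0 uk a a0 ak : ℂ)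
    (hu : u ≠ 0) (hu0 : u0 ≠ 0) (huk : uk ≠ 0) (ha : a ≠ 0) (ha0 : a0 ≠ 0) (hak : ak ≠ 0)
    (N0 : ℂ)
    (hN0 : N0 = (u0 ^ 2)⁻¹ * (u ^ 2)⁻¹ * (1 + u0 ^ 2) * (1 + u ^ 2) * (1 + u0 ^ 2 * u ^ 2))
    (hN0ne : N0 ≠ 0)
    (p : Hecke k u u0 uk)
    (hp : p = N0⁻¹ • (T k u u0 uk 0 * T k u u0 uk 1 * T k u u0 uk 0 * T k u u0 uk 1
        - u0 • (T k u u0 uk 1 * T k u u0 uk 0 * T k u u0 uk 1)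
        - u • (T k u u0 uk 0 * T k u u0 uk 1 * T k u u0 uk 0)
        + (u0 * u) • (T k u u0 uk 0 * T k u u0 uk 1)
        + (u0 * u) • (T k u u0 uk 1 * T k u u0 uk 0)
        - (u0 ^ 2 * u) • T k u u0 uk 1
        - (u0 * u ^ 2) • T k u u0 uk 0
        + (u0 ^ 2 * u ^ 2) • (1 : Hecke k u u0 uk))) :
    p * p = p ∧
    T k u u0 uk 0 * p = (-u0⁻¹) • p ∧
    T k u u0 uk 1 * p = (-u⁻¹) • p ∧
    N0 • p = (a0 ^ 2 * a ^ 2) • (e k u u0 uk a a0 ak 0 * e k u u0 uk a a0 ak 1 *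
          e k u u0 uk a a0 ak 0 * e k u u0 uk a a0 ak 1)
        - (a0 * a * (u0⁻¹ * u + u0 * u⁻¹)) • (e k u u0 uk a a0 ak 0 * e k u u0 uk a a0 ak 1) ∧
    N0 • p = (a0 ^ 2 * a ^ 2) • (e k u u0 uk a a0 ak 1 * e k u u0 uk a a0 ak 0 *
          e k u u0 uk a a0 ak 1 * e k u u0 uk a a0 ak 0)
        - (a0 * a * (u0⁻¹ * u + u0 * u⁻¹)) • (e k u u0 uk a a0 ak 1 * e k u u0 uk a a0 ak 0) :=
  statement6_general (isHeckePair_T k u u0 uk hk) hu0 hu (smul_e_zero k u u0 uk a a0 ak ha0)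
    (smul_e_of_ne k u u0 uk a a0 ak one_ne_zero (by lia) ha) hN0 hN0ne hp

end TwoBoundaryTL
end
end

section
/- Let A be a unital associative ℂ-algebra, let t^{1/2}, t_0^{1/2}, a, a_0 ∈ ℂ^× with t = (t^{1/2})² and t_0 = (t_0^{1/2})², and let x, y ∈ A satisfy (x − t_0^{1/2})(x + t_0^{−1/2}) = 0 and (y − t^{1/2})(y + t^{−1/2}) = 0. Set e = a_0^{−1}(x − t_0^{1/2}) and f = a^{−1}(y − t^{1/2}). Then xyxy = yxyx if and only if a_0²a²efef − a_0a(t_0^{−1/2}t^{1/2} + t_0^{1/2}t^{−1/2})ef = a_0²a²fefe − a_0a(t_0^{−1/2}t^{1/2} + t_0^{1/2}t^{−1/2})fe. In particular, if a_0a = t_0^{−1/2}t^{1/2} + t_0^{1/2}t^{−1/2}, then xyxy = yxyx if and only if efef − ef = fefe − fe. -/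
/-!
Suppose `(x - p)(x + p') = 0` and `(y - q)(y + q') = 0`, and put `X = x - p`, `Y = y - q`. Expanding
`(xy)² - (yx)²` leaves `(XY)² - (YX)²` and a combination of the commutators `[X², Y]`, `[X, Y²]`
and `[X, Y]`. Since `X² = -(p + p') X` and `Y² = -(q + q') Y`, the commutators collapse to
`-(p' q + p q') [X, Y]`; rescaling `X` and `Y` to `e` and `f` gives the result.
-/

section QuadraticRelations

variable {R A : Type*} [CommRing R] [Ring A] [Algebra R A]

theorem sq_sub_algebraMap_of_mul_eq_zero {p p' : R} {x : A}
    (hx : (x - algebraMap R A p) * (x + algebraMap R A p') = 0) :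
    (x - algebraMap R A p) ^ 2 = -(p + p') • (x - algebraMap R A p) := by
  have hsplit : x - algebraMap R A p =
      (x + algebraMap R A p') - algebraMap R A (p + p') := by
    rw [map_add]; abel
  calc (x - algebraMap R A p) ^ 2
      = (x - algebraMap R A p) * ((x + algebraMap R A p') - algebraMap R A (p + p')) := by
        rw [← hsplit, sq]
    _ = -(p + p') • (x - algebraMap R A p) := by
        rw [mul_sub, hx, zero_sub, ← Algebra.commutes, ← Algebra.smul_def, neg_smul]

theorem sq_mul_sub_sq_mul_add_algebraMap (p q : R) (X Y : A) :
    ((X + algebraMap R A p) * (Y + algebraMap R A q)) ^ 2 -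
        ((Y + algebraMap R A q) * (X + algebraMap R A p)) ^ 2 =
      (X * Y) ^ 2 - (Y * X) ^ 2 + q • ⁅X ^ 2, Y⁆ + p • ⁅X, Y ^ 2⁆ + (2 * p * q) • ⁅X, Y⁆ := by
  simp only [Algebra.algebraMap_eq_smul_one, Ring.lie_def, sq, mul_add, add_mul, mul_assoc,
    smul_mul_assoc, mul_smul_comm, mul_one, one_mul, smul_add]
  module

theorem sq_mul_sub_sq_mul_of_mul_eq_zero {p p' q q' : R} {x y : A}
    (hx : (x - algebraMap R A p) * (x + algebraMap R A p') = 0)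
    (hy : (y - algebraMap R A q) * (y + algebraMap R A q') = 0) :
    (x * y) ^ 2 - (y * x) ^ 2 =
      ((x - algebraMap R A p) * (y - algebraMap R A q)) ^ 2 -
          ((y - algebraMap R A q) * (x - algebraMap R A p)) ^ 2 -
        (p' * q + p * q') • ⁅x - algebraMap R A p, y - algebraMap R A q⁆ := by
  have hexpand := sq_mul_sub_sq_mul_add_algebraMap p q
    (x - algebraMap R A p) (y - algebraMap R A q)
  rw [sub_add_cancel, sub_add_cancel, sq_sub_algebraMap_of_mul_eq_zero hx,
    sq_sub_algebraMap_of_mul_eq_zero hy] at hexpand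
  rw [hexpand]
  simp only [Ring.lie_def, smul_mul_assoc, mul_smul_comm]
  module

theorem sq_mul_sub_sq_mul_of_smul_eq_sub {p p' q q' a b : R} {x y e f : A}
    (hx : (x - algebraMap R A p) * (x + algebraMap R A p') = 0)
    (hy : (y - algebraMap R A q) * (y + algebraMap R A q') = 0)
    (he : a • e = x - algebraMap R A p) (hf : b • f = y - algebraMap R A q) :
    (x * y) ^ 2 - (y * x) ^ 2 =
      (a ^ 2 * b ^ 2) • ((e * f) ^ 2 - (f * e) ^ 2) -
        (a * b * (p' * q + p * q')) • ⁅e, f⁆ := by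
  rw [sq_mul_sub_sq_mul_of_mul_eq_zero hx hy, ← he, ← hf]
  simp only [Ring.lie_def, smul_mul_smul_comm, smul_pow]
  module

theorem statement11_general {p p' q q' a b : R} {x y e f : A}
    (hx : (x - algebraMap R A p) * (x + algebraMap R A p') = 0)
    (hy : (y - algebraMap R A q) * (y + algebraMap R A q') = 0)
    (he : a • e = x - algebraMap R A p) (hf : b • f = y - algebraMap R A q) :
    (x * y * x * y = y * x * y * x ↔
      (a ^ 2 * b ^ 2) • (e * f * e * f) - (a * b * (p' * q + p * q')) • (e * f)
        = (a ^ 2 * b ^ 2) • (f * e * f * e) - (a * b * (p' * q + p * q')) • (f * e)) ∧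
    (IsSMulRegular A (a * b) → a * b = p' * q + p * q' →
      (x * y * x * y = y * x * y * x ↔
        e * f * e * f - e * f = f * e * f * e - f * e)) := by
  have hdiff := sq_mul_sub_sq_mul_of_smul_eq_sub hx hy he hf
  simp only [sq (_ * _), ← mul_assoc, Ring.lie_def] at hdiff
  have hiff : x * y * x * y = y * x * y * x ↔
      (a ^ 2 * b ^ 2) • (e * f * e * f) - (a * b * (p' * q + p * q')) • (e * f)
        = (a ^ 2 * b ^ 2) • (f * e * f * e) - (a * b * (p' * q + p * q')) • (f * e) := by
    rw [← sub_eq_zero, hdiff, smul_sub, smul_sub, sub_sub_sub_comm, sub_eq_zero]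
  refine ⟨hiff, fun hreg hab => ?_⟩
  rw [hiff, ← hab, ← mul_pow, ← sq, ← smul_sub, ← smul_sub]
  exact (hreg.pow 2).eq_iff

end QuadraticRelations

/-- for elements `x, y` of a unital associative `ℂ`-algebra satisfying
`(x - t_0^{1/2})(x + t_0^{-1/2}) = 0` and `(y - t^{1/2})(y + t^{-1/2}) = 0`, with
`e = a_0⁻¹(x - t_0^{1/2})` and `f = a⁻¹(y - t^{1/2})`, the relation `xyxy = yxyx` is equivalent
to `a_0²a²efef - a_0a(t_0^{-1/2}t^{1/2}+t_0^{1/2}t^{-1/2})ef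
  = a_0²a²fefe - a_0a(t_0^{-1/2}t^{1/2}+t_0^{1/2}t^{-1/2})fe`;
and if `a_0a = t_0^{-1/2}t^{1/2}+t_0^{1/2}t^{-1/2}` it is equivalent to
`efef - ef = fefe - fe`. -/
theorem statement11 (A : Type*) [Ring A] [Algebra ℂ A]
    (u u0 a a0 : ℂ) (hu : u ≠ 0) (hu0 : u0 ≠ 0) (ha : a ≠ 0) (ha0 : a0 ≠ 0)
    (x y : A)
    (hx : (x - algebraMap ℂ A u0) * (x + algebraMap ℂ A u0⁻¹) = 0)
    (hy : (y - algebraMap ℂ A u) * (y + algebraMap ℂ A u⁻¹) = 0)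
    (e f : A)
    (he : e = a0⁻¹ • (x - algebraMap ℂ A u0))
    (hf : f = a⁻¹ • (y - algebraMap ℂ A u)) :
    (x * y * x * y = y * x * y * x ↔
      (a0 ^ 2 * a ^ 2) • (e * f * e * f) - (a0 * a * (u0⁻¹ * u + u0 * u⁻¹)) • (e * f)
        = (a0 ^ 2 * a ^ 2) • (f * e * f * e) - (a0 * a * (u0⁻¹ * u + u0 * u⁻¹)) • (f * e)) ∧
    (a0 * a = u0⁻¹ * u + u0 * u⁻¹ →
      (x * y * x * y = y * x * y * x ↔
        e * f * e * f - e * f = f * e * f * e - f * e)) := by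
  have hgen := statement11_general hx hy (he ▸ smul_inv_smul₀ ha0 _) (hf ▸ smul_inv_smul₀ ha _)
  exact ⟨hgen.1, hgen.2 (IsSMulRegular.of_ne_zero (mul_ne_zero ha0 ha))⟩
end

section
/- In TL_k the following identities hold: (ae_1)T_0T_1 = t^{1/2}(ae_1)T_0^{−1}; T_1T_0(ae_1) = t^{1/2}T_0^{−1}(ae_1); (ae_{k−1})T_kT_{k−1} = t^{1/2}(ae_{k−1})T_k^{−1}; and T_{k−1}T_k(ae_{k−1}) = t^{1/2}T_k^{−1}(ae_{k−1}). -/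
noncomputable section

open scoped BigOperators

namespace TwoBoundaryTL

variable (k : ℕ) (u u0 uk a a0 ak : ℂ)

/-!
Write `T_i = E + u`, where `E = ae_i` for the node `i` next to a pole, and `T_p = F + r`, where
`F = a_pe_p` for the pole `p` and `r = t_p^{1/2}`. The quadratic relation says `E² = -(u + u⁻¹)E`
and the boundary relation says `EFE = (r⁻¹u + ru⁻¹)E`. When `E(F + r)(E + u)` is expanded, the
multiples of `E` collect to `r⁻¹uE`, which leaves `uE(F + r⁻¹) = uE T_p⁻¹`. Both relations are
invariant under reversal of products, so the mirror identity comes from the opposite algebra.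
-/

section BlobPair

variable {R A : Type*} [CommRing R] [Ring A] [Algebra R A] {q q' r r' : R} {E F : A}

/-- The relations between a Temperley–Lieb generator `E` with loop value `-(q + q')` and an
adjacent boundary generator `F`, up to rescaling those of the blob (one-boundary
Temperley–Lieb) algebra. The scalars `q'` and `r'` play the roles of `q⁻¹` and `r⁻¹`, but need
not be inverses. -/
structure IsBlobPair (q q' r r' : R) (E F : A) : Prop where
  mul_self : E * E = -(q + q') • E
  mul_mul_self : E * F * E = (r' * q + r * q') • E

namespace IsBlobPair

theorem op (h : IsBlobPair q q' r r' E F) :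
    IsBlobPair q q' r r' (MulOpposite.op E) (MulOpposite.op F) where
  mul_self := congrArg MulOpposite.op h.mul_self
  mul_mul_self := by
    rw [mul_assoc]
    exact congrArg MulOpposite.op h.mul_mul_self

theorem mul_add_mul_add (h : IsBlobPair q q' r r' E F) :
    E * (F + algebraMap R A r) * (E + algebraMap R A q) =
      q • (E * (F + algebraMap R A r')) :=
  calc
    E * (F + algebraMap R A r) * (E + algebraMap R A q)
      = E * F * E + r • (E * E) + q • (E * F) + (q * r) • E := by
        simp only [Algebra.algebraMap_eq_smul_one, mul_add, add_mul, mul_smul_comm,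
          smul_mul_assoc, mul_one]
        module
    _ = q • (E * F) + (q * r') • E := by
        rw [h.mul_self, h.mul_mul_self]
        module
    _ = q • (E * (F + algebraMap R A r')) := by
        rw [mul_add, ← Algebra.commutes, ← Algebra.smul_def, smul_add, smul_smul]

theorem add_mul_add_mul (h : IsBlobPair q q' r r' E F) :
    (E + algebraMap R A q) * (F + algebraMap R A r) * E =
      q • ((F + algebraMap R A r') * E) := by
  rw [mul_assoc]
  exact congrArg MulOpposite.unop h.op.mul_add_mul_add

end IsBlobPair

end BlobPair

section Hecke

variable {k u u0 uk a a0 ak}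

variable (a ak) in
theorem T_zero_eq (ha0 : a0 ≠ 0) :
    T k u u0 uk 0 = a0 • e k u u0 uk a a0 ak 0 + hc k u u0 uk u0 := by
  simp [e, ha0]

variable (a ak) in
theorem Tinv_zero_eq (ha0 : a0 ≠ 0) :
    Tinv k u u0 uk 0 = a0 • e k u u0 uk a a0 ak 0 + hc k u u0 uk u0⁻¹ := by
  simp [Tinv, e, hc, ha0, sub_add]

variable (a a0) in
theorem T_last_eq (hk : k ≠ 0) (hak : ak ≠ 0) :
    T k u u0 uk k = ak • e k u u0 uk a a0 ak k + hc k u u0 uk uk := by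
  simp [e, hk, hak]

variable (a a0) in
theorem Tinv_last_eq (hk : k ≠ 0) (hak : ak ≠ 0) :
    Tinv k u u0 uk k = ak • e k u u0 uk a a0 ak k + hc k u u0 uk uk⁻¹ := by
  simp [Tinv, e, hc, hk, hak, sub_add]

variable (a0 ak) in
theorem T_eq_of_ne {i : ℕ} (hi0 : i ≠ 0) (hik : i ≠ k) (ha : a ≠ 0) :
    T k u u0 uk i = a • e k u u0 uk a a0 ak i + hc k u u0 uk u := by
  simp [e, hi0, hik, ha]

theorem T_sub_mul_T_add {i : ℕ} (hi0 : 0 < i) (hik : i < k) :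
    (T k u u0 uk i - hc k u u0 uk u) * (T k u u0 uk i + hc k u u0 uk u⁻¹) = 0 := by
  have h := RingQuot.mkAlgHom_rel ℂ
    (HeckeRel.quad (k := k) (u := u) (u0 := u0) (uk := uk) i hi0 (Nat.le_sub_one_of_lt hik))
  simp only [map_mul, map_sub, map_add, map_zero, cst, AlgHom.commutes] at h
  exact h

theorem smul_e_mul_self {i : ℕ} (hi0 : 0 < i) (hik : i < k) (ha : a ≠ 0) :
    (a • e k u u0 uk a a0 ak i) * (a • e k u u0 uk a a0 ak i) =
      -(u + u⁻¹) • (a • e k u u0 uk a a0 ak i) := by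
  have h := T_sub_mul_T_add (u := u) (u0 := u0) (uk := uk) hi0 hik
  rw [T_eq_of_ne a0 ak hi0.ne' hik.ne ha, add_sub_cancel_right, add_assoc, hc, hc,
    ← map_add, mul_add, ← Algebra.commutes, ← Algebra.smul_def] at h
  rw [neg_smul]
  exact eq_neg_of_add_eq_zero_left h

end Hecke

section TemperleyLieb

variable {k u u0 uk a a0 ak}

theorem TLRel.π_mul_π_mul_π {b c : ℂ} {i j : ℕ}
    (h : TLRel k u u0 uk a a0 ak
      ((b * a ^ 2) • (e k u u0 uk a a0 ak i * e k u u0 uk a a0 ak j * e k u u0 uk a a0 ak i)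
        - (a * c) • e k u u0 uk a a0 ak i) 0) :
    π k u u0 uk a a0 ak (a • e k u u0 uk a a0 ak i) *
        π k u u0 uk a a0 ak (b • e k u u0 uk a a0 ak j) *
        π k u u0 uk a a0 ak (a • e k u u0 uk a a0 ak i) =
      c • π k u u0 uk a a0 ak (a • e k u u0 uk a a0 ak i) := by
  have hπ : π k u u0 uk a a0 ak _ = π k u u0 uk a a0 ak _ := RingQuot.mkAlgHom_rel ℂ h
  simp only [map_zero, map_sub, sub_eq_zero, map_smul, map_mul] at hπ
  simp only [map_smul, smul_mul_assoc, mul_smul_comm, smul_smul]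
  convert hπ using 2 <;> ring

variable (u u0 uk a0 ak)

theorem isBlobPair_zero (hk : 1 < k) (ha : a ≠ 0) :
    IsBlobPair u u⁻¹ u0 u0⁻¹ (π k u u0 uk a a0 ak (a • e k u u0 uk a a0 ak 1))
      (π k u u0 uk a a0 ak (a0 • e k u u0 uk a a0 ak 0)) where
  mul_self := by rw [← map_mul, smul_e_mul_self one_pos hk ha, map_smul]
  mul_mul_self := TLRel.bd0.π_mul_π_mul_π

theorem isBlobPair_last (hk : 1 < k) (ha : a ≠ 0) :
    IsBlobPair u u⁻¹ uk uk⁻¹ (π k u u0 uk a a0 ak (a • e k u u0 uk a a0 ak (k - 1)))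
      (π k u u0 uk a a0 ak (ak • e k u u0 uk a a0 ak k)) where
  mul_self := by
    rw [← map_mul, smul_e_mul_self (by omega) (by omega) ha, map_smul]
  mul_mul_self := TLRel.bdk.π_mul_π_mul_π

end TemperleyLieb

/-- pole-flip identities in `TL_k`. -/
theorem statement12 (k : ℕ) (hk : 2 ≤ k) (u u0 uk a a0 ak : ℂ)
    (hu : u ≠ 0) (hu0 : u0 ≠ 0) (huk : uk ≠ 0) (ha : a ≠ 0) (ha0 : a0 ≠ 0) (hak : ak ≠ 0) :
    π k u u0 uk a a0 ak ((a • e k u u0 uk a a0 ak 1) * T k u u0 uk 0 * T k u u0 uk 1)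
      = u • π k u u0 uk a a0 ak ((a • e k u u0 uk a a0 ak 1) * Tinv k u u0 uk 0) ∧
    π k u u0 uk a a0 ak (T k u u0 uk 1 * T k u u0 uk 0 * (a • e k u u0 uk a a0 ak 1))
      = u • π k u u0 uk a a0 ak (Tinv k u u0 uk 0 * (a • e k u u0 uk a a0 ak 1)) ∧
    π k u u0 uk a a0 ak ((a • e k u u0 uk a a0 ak (k-1)) * T k u u0 uk k * T k u u0 uk (k-1))
      = u • π k u u0 uk a a0 ak ((a • e k u u0 uk a a0 ak (k-1)) * Tinv k u u0 uk k) ∧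
    π k u u0 uk a a0 ak (T k u u0 uk (k-1) * T k u u0 uk k * (a • e k u u0 uk a a0 ak (k-1)))
      = u • π k u u0 uk a a0 ak (Tinv k u u0 uk k * (a • e k u u0 uk a a0 ak (k-1))) := by
  have h0 := isBlobPair_zero u u0 uk a0 ak hk ha
  have hlast := isBlobPair_last u u0 uk a0 ak hk ha
  rw [T_zero_eq a ak ha0, Tinv_zero_eq a ak ha0,
    T_last_eq a a0 (by omega) hak, Tinv_last_eq a a0 (by omega) hak,
    T_eq_of_ne a0 ak (i := 1) (by omega) (by omega) ha,
    T_eq_of_ne a0 ak (i := k - 1) (by omega) (by omega) ha]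
  simp only [hc, map_mul, map_add, AlgHom.commutes]
  exact ⟨h0.mul_add_mul_add, h0.add_mul_add_mul, hlast.mul_add_mul_add, hlast.add_mul_add_mul⟩

end TwoBoundaryTL
end
end
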